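/- Let 0<α≤1 and let {q_n : n≥0} be a non-increasing sequence of non-negative reals with q_0>0 satisfying n^α/Q_n = O(1) and (q_n − q_{n+1})/n^{α−2} = O(1) as n→∞. Then there exists a constant c_α such that for all N∈ℕ, all r ≥ M_N, all 0 ≤ k ≤ N−1, all 1 ≤ s_k ≤ m_k−1, and all x ∈ I_N(s_k e_k): ∫_{I_N} |F_r(x−t)| dμ(t) ≤ c_α M_k / M_N. -/

import Mathlib

open MeasureTheory Filter Finset Asymptotics
open scoped ENNReal NNReal

noncomputable section

namespace Vilenkin

/-- The Vilenkin group `G_m`: the complete direct product of the cyclic groups `Z_{m_n}`. -/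
abbrev G (m : ℕ → ℕ) := ∀ n, ZMod (m n)

/-- The generalized number system `M_0 = 1`, `M_{n+1} = m_n M_n`. -/
def MM (m : ℕ → ℕ) : ℕ → ℕ
  | 0 => 1
  | n + 1 => m n * MM m n

/-- The generalized Rademacher functions `r_k(x) = exp(2 π i x_k / m_k)`. -/
def rade (m : ℕ → ℕ) (k : ℕ) (x : G m) : ℂ :=
  Complex.exp (2 * Real.pi * Complex.I * ((x k).val : ℂ) / (m k : ℂ))

/-- The Vilenkin system `ψ_n = ∏_k r_k^{n_k}`, where `n = ∑_k n_k M_k` is the expansion of `n`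
in the generalized number system (the digits `n_k = (n / M_k) mod m_k` vanish for `k > n`). -/
def psi (m : ℕ → ℕ) (n : ℕ) (x : G m) : ℂ :=
  ∏ k ∈ Finset.range (n + 1), rade m k x ^ (n / MM m k % m k)

/-- The Dirichlet kernels `D_n = ∑_{k=0}^{n-1} ψ_k`. -/
def D (m : ℕ → ℕ) (n : ℕ) (x : G m) : ℂ := ∑ k ∈ Finset.range n, psi m k x

/-- The Fejér kernels `K_n = (1/n) ∑_{k=1}^{n} D_k`. -/
def K (m : ℕ → ℕ) (n : ℕ) (x : G m) : ℂ := (n : ℂ)⁻¹ * ∑ k ∈ Finset.Icc 1 n, D m k x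

/-- `Q_n = ∑_{k=0}^{n-1} q_k`. -/
def Q (q : ℕ → ℝ) (n : ℕ) : ℝ := ∑ k ∈ Finset.range n, q k

/-- The Nörlund kernels `F_n = (1/Q_n) ∑_{k=1}^{n} q_{n-k} D_k`. -/
def F (m : ℕ → ℕ) (q : ℕ → ℝ) (n : ℕ) (x : G m) : ℂ :=
  ((Q q n : ℝ) : ℂ)⁻¹ * ∑ k ∈ Finset.Icc 1 n, (q (n - k) : ℂ) * D m k x

/-- The interval (cylinder) `I_n(x) = {y : y_j = x_j for all j < n}`. -/
def cyl (m : ℕ → ℕ) (n : ℕ) (x : G m) : Set (G m) := {y | ∀ j < n, y j = x j}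

/-- The element `s_k e_k` of `G_m` (value `s_k` in coordinate `k`, zero elsewhere). -/
def oneSpike (m : ℕ → ℕ) (k sk : ℕ) : G m := fun j => if j = k then (sk : ZMod (m j)) else 0

/-- The element `s_k e_k + s_l e_l` of `G_m` (for `k ≠ l`). -/
def twoSpike (m : ℕ → ℕ) (k sk l sl : ℕ) : G m :=
  fun j => if j = k then (sk : ZMod (m j)) else if j = l then (sl : ZMod (m j)) else 0

/-- The σ-algebra `𝔉_n` generated by the intervals `I_n(x)`, i.e. by the first `n`
coordinates. -/
def filt (m : ℕ → ℕ) (n : ℕ) : MeasurableSpace (G m) :=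
  MeasurableSpace.comap (fun x (i : Fin n) => x i.val) inferInstance

/-- `f = (f^{(n)})` is a martingale with respect to the filtration `(𝔉_n)` and the measure `μ`. -/
def IsMartingale (m : ℕ → ℕ) (μ : Measure (G m)) (f : ℕ → G m → ℂ) : Prop :=
  (∀ n, Integrable (f n) μ) ∧ (∀ n, Measurable[filt m n] (f n)) ∧
    ∀ n, ∀ s : Set (G m), MeasurableSet[filt m n] s →
      ∫ x in s, f (n + 1) x ∂μ = ∫ x in s, f n x ∂μ

/-- The `L_p`-quasinorm `(∫ g^p dμ)^{1/p}` of a nonnegative (extended-real-valued) function. -/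
def lpNormE (m : ℕ → ℕ) (μ : Measure (G m)) (p : ℝ) (g : G m → ℝ≥0∞) : ℝ≥0∞ :=
  (∫⁻ x, g x ^ p ∂μ) ^ (1 / p)

/-- The martingale Hardy space quasinorm `‖f‖_{H_p} = ‖sup_n |f^{(n)}|‖_p`. -/
def HpNorm (m : ℕ → ℕ) (μ : Measure (G m)) (p : ℝ) (f : ℕ → G m → ℂ) : ℝ≥0∞ :=
  lpNormE m μ p (fun x => ⨆ n, (‖f n x‖₊ : ℝ≥0∞))

/-- The Vilenkin-Fourier coefficients of a martingale:
`f̂(i) = lim_k ∫ f^{(k)} conj ψ_i dμ`. -/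
def mcoef (m : ℕ → ℕ) (μ : Measure (G m)) (f : ℕ → G m → ℂ) (i : ℕ) : ℂ :=
  limUnder atTop fun k => ∫ x, f k x * (starRingEnd ℂ) (psi m i x) ∂μ

/-- The partial sums `S_n f = ∑_{k=0}^{n-1} f̂(k) ψ_k` of the Vilenkin-Fourier series of a
martingale. -/
def mS (m : ℕ → ℕ) (μ : Measure (G m)) (f : ℕ → G m → ℂ) (n : ℕ) (x : G m) : ℂ :=
  ∑ k ∈ Finset.range n, mcoef m μ f k * psi m k x

/-- The Nörlund means `t_n f = (1/Q_n) ∑_{k=1}^{n} q_{n-k} S_k f` of a martingale. -/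
def mT (m : ℕ → ℕ) (q : ℕ → ℝ) (μ : Measure (G m)) (f : ℕ → G m → ℂ) (n : ℕ) (x : G m) : ℂ :=
  ((Q q n : ℝ) : ℂ)⁻¹ * ∑ k ∈ Finset.Icc 1 n, (q (n - k) : ℂ) * mS m μ f k x

/-- The Cesàro numbers `A_0^α = 0`, `A_n^α = (α+1)⋯(α+n)/n!`. -/
def AC (α : ℝ) (n : ℕ) : ℝ :=
  if n = 0 then 0 else (∏ j ∈ Finset.Icc 1 n, (α + (j : ℝ))) / (n.factorial : ℝ)

/-- The `(C,α)` (Cesàro) means `σ_n^α f = (1/A_n^α) ∑_{k=1}^{n} A_{n-k}^{α-1} S_k f` of a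
martingale. -/
def mCes (m : ℕ → ℕ) (α : ℝ) (μ : Measure (G m)) (f : ℕ → G m → ℂ) (n : ℕ) (x : G m) : ℂ :=
  ((AC α n : ℝ) : ℂ)⁻¹ * ∑ k ∈ Finset.Icc 1 n, ((AC (α - 1) (n - k) : ℝ) : ℂ) * mS m μ f k x

/-- The Fejér means `σ_n f = (1/n) ∑_{k=1}^{n} S_k f` of a martingale. -/
def mFej (m : ℕ → ℕ) (μ : Measure (G m)) (f : ℕ → G m → ℂ) (n : ℕ) (x : G m) : ℂ :=
  (n : ℂ)⁻¹ * ∑ k ∈ Finset.Icc 1 n, mS m μ f k x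

/-- The Vilenkin-Fourier coefficients of an integrable function. -/
def fcoef (m : ℕ → ℕ) (μ : Measure (G m)) (g : G m → ℂ) (i : ℕ) : ℂ :=
  ∫ x, g x * (starRingEnd ℂ) (psi m i x) ∂μ

/-- The partial sums of the Vilenkin-Fourier series of an integrable function. -/
def fS (m : ℕ → ℕ) (μ : Measure (G m)) (g : G m → ℂ) (n : ℕ) (x : G m) : ℂ :=
  ∑ k ∈ Finset.range n, fcoef m μ g k * psi m k x

/-- The Nörlund means of an integrable function. -/
def fT (m : ℕ → ℕ) (q : ℕ → ℝ) (μ : Measure (G m)) (g : G m → ℂ) (n : ℕ) (x : G m) : ℂ :=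
  ((Q q n : ℝ) : ℂ)⁻¹ * ∑ k ∈ Finset.Icc 1 n, (q (n - k) : ℂ) * fS m μ g k x


section Helpers

variable {m : ℕ → ℕ}

lemma MM_succ (n : ℕ) : MM m (n + 1) = m n * MM m n := rfl

lemma MM_pos (hm : ∀ n, 2 ≤ m n) (n : ℕ) : 0 < MM m n := by
  induction n with
  | zero => simp [MM]
  | succ n ih => rw [MM_succ]; have := hm n; positivity

lemma MM_two (hm : ∀ n, 2 ≤ m n) (n : ℕ) : 2 * MM m n ≤ MM m (n + 1) := by
  rw [MM_succ]; exact Nat.mul_le_mul_right _ (hm n)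

lemma MM_gt (hm : ∀ n, 2 ≤ m n) (n : ℕ) : n < MM m n := by
  induction n with
  | zero => simp [MM]
  | succ n ih => have := MM_two hm n; omega

lemma MM_dvd_le {a b : ℕ} (h : a ≤ b) : MM m a ∣ MM m b := by
  induction b, h using Nat.le_induction with
  | base => exact dvd_rfl
  | succ b _ ih => exact ih.trans (Dvd.intro_left _ rfl)

lemma MM_mono (hm : ∀ n, 2 ≤ m n) {a b : ℕ} (h : a ≤ b) : MM m a ≤ MM m b :=
  Nat.le_of_dvd (MM_pos hm b) (MM_dvd_le h)

lemma psi_ext (x : G m) (n : ℕ) {L L' : ℕ} (hL : n < MM m L) (h : L ≤ L')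
    (hm : ∀ n, 2 ≤ m n) :
    ∏ k ∈ Finset.range L, rade m k x ^ (n / MM m k % m k) =
    ∏ k ∈ Finset.range L', rade m k x ^ (n / MM m k % m k) := by
  apply Finset.prod_subset (Finset.range_mono h)
  intro k _ hk
  have : L ≤ k := by simpa using hk
  have := MM_mono hm this
  rw [Nat.div_eq_of_lt (by omega)]
  simp

lemma psi_eq (hm : ∀ n, 2 ≤ m n) (x : G m) (n L : ℕ) (hL : n < MM m L) :
    psi m n x = ∏ k ∈ Finset.range L, rade m k x ^ (n / MM m k % m k) := by
  have h1 : n < MM m (n + 1) := lt_trans (Nat.lt_succ_self n) (MM_gt hm (n + 1))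
  unfold psi
  rcases le_total (n + 1) L with h | h
  · exact psi_ext x n h1 h hm
  · exact (psi_ext x n hL h hm).symm

lemma psi_add (hm : ∀ n, 2 ≤ m n) (x : G m) (A u j : ℕ) (hu : u < m A) (hj : j < MM m A) :
    psi m (u * MM m A + j) x = rade m A x ^ u * psi m j x := by
  have hlt : u * MM m A + j < MM m (A + 1) := by
    rw [MM_succ]; nlinarith
  rw [psi_eq hm x _ _ hlt, psi_eq hm x j A hj, Finset.prod_range_succ, mul_comm]
  congr 1
  · congr 1
    rw [mul_comm, Nat.mul_add_div (MM_pos hm A), Nat.div_eq_of_lt hj, add_zero, Nat.mod_eq_of_lt hu]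
  · apply Finset.prod_congr rfl
    intro k hk
    congr 1
    obtain ⟨w, hw⟩ := MM_dvd_le (m := m) (show k + 1 ≤ A by simpa using hk)
    have : u * MM m A + j = MM m k * (m k * (w * u)) + j := by rw [hw, MM_succ]; ring
    rw [this, Nat.mul_add_div (MM_pos hm k), Nat.mul_add_mod]

lemma rade_norm (x : G m) (k : ℕ) : ‖rade m k x‖ = 1 := by
  unfold rade
  rw [show (2 * Real.pi * Complex.I * ((x k).val : ℂ) / (m k : ℂ)) =
    ((2 * Real.pi * (x k).val / m k : ℝ) : ℂ) * Complex.I by push_cast; ring]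
  exact Complex.norm_exp_ofReal_mul_I _

lemma rade_conj (x : G m) (k : ℕ) : rade m k x * (starRingEnd ℂ) (rade m k x) = 1 := by
  rw [Complex.mul_conj, Complex.normSq_eq_norm_sq, rade_norm]; simp

lemma psi_norm (x : G m) (n : ℕ) : ‖psi m n x‖ = 1 := by
  unfold psi
  rw [norm_prod]
  exact Finset.prod_eq_one fun k _ => by rw [norm_pow, rade_norm, one_pow]

lemma rade_pow (x : G m) (k : ℕ) :
    rade m k x = Complex.exp (2 * Real.pi * Complex.I / (m k : ℂ)) ^ (x k).val := by
  unfold rade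
  rw [← Complex.exp_nat_mul]; congr 1; ring

lemma rade_sum (hm : ∀ n, 2 ≤ m n) (x : G m) (k : ℕ) :
    ∑ v ∈ Finset.range (m k), rade m k x ^ v = if x k = 0 then (m k : ℂ) else 0 := by
  have hk : m k ≠ 0 := by have := hm k; omega
  have : NeZero (m k) := ⟨hk⟩
  have hp := Complex.isPrimitiveRoot_exp (m k) hk
  split_ifs with h
  · have : rade m k x = 1 := by rw [rade_pow, h]; simp
    simp [this]
  · have h1 : rade m k x ≠ 1 := by
      rw [rade_pow]
      exact hp.pow_ne_one_of_pos_of_lt (by simpa using h) (ZMod.val_lt _)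
    have h2 : rade m k x ^ m k = 1 := by
      rw [rade_pow, ← pow_mul, mul_comm (x k).val, pow_mul, hp.pow_eq_one, one_pow]
    rw [geom_sum_eq h1, h2]; simp

lemma D_zero (x : G m) : D m 0 x = 0 := by simp [D]

lemma D_block (hm : ∀ n, 2 ≤ m n) (x : G m) (A u j : ℕ) (hu : u < m A) (hj : j ≤ MM m A) :
    D m (u * MM m A + j) x = D m (u * MM m A) x + rade m A x ^ u * D m j x := by
  unfold D
  rw [Finset.sum_range_add, Finset.mul_sum]
  congr 1
  apply Finset.sum_congr rfl
  intro i hi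
  exact psi_add hm x A u i hu (by have := Finset.mem_range.1 hi; omega)

lemma D_mul (hm : ∀ n, 2 ≤ m n) (x : G m) (A u : ℕ) (hu : u ≤ m A) :
    D m (u * MM m A) x = (∑ v ∈ Finset.range u, rade m A x ^ v) * D m (MM m A) x := by
  induction u with
  | zero => simp [D]
  | succ u ih =>
    rw [Nat.succ_mul, D_block hm x A u _ (by omega) le_rfl, ih (by omega), Finset.sum_range_succ]
    ring

lemma D_MM (hm : ∀ n, 2 ≤ m n) (x : G m) (A : ℕ) :
    D m (MM m A) x = if (∀ j < A, x j = 0) then (MM m A : ℂ) else 0 := by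
  induction A with
  | zero => simp [D, MM, psi]
  | succ A ih =>
    rw [MM_succ, D_mul hm x A _ le_rfl, ih, rade_sum hm]
    have : (∀ j < A + 1, x j = 0) ↔ (x A = 0 ∧ ∀ j < A, x j = 0) := by
      rw [Nat.forall_lt_succ_right, and_comm]
    simp only [this]
    by_cases h1 : x A = 0 <;> by_cases h2 : ∀ j < A, x j = 0 <;> simp [h1, h2]

lemma D_le (x : G m) (n : ℕ) : ‖D m n x‖ ≤ n := by
  unfold D
  refine (norm_sum_le _ _).trans ?_
  simp [psi_norm]

lemma D_bound (hm : ∀ n, 2 ≤ m n) (x : G m) (k : ℕ) (hk : x k ≠ 0) (A : ℕ) :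
    ∀ n < MM m A, ‖D m n x‖ ≤ MM m (k + 1) := by
  induction A with
  | zero => intro n hn; exact (D_le x n).trans (by
      have := MM_mono hm (Nat.zero_le (k + 1)); exact_mod_cast (by omega))
  | succ A ih =>
    intro n hn
    by_cases hA : A + 1 ≤ k + 1
    · exact (D_le x n).trans (by have := MM_mono hm hA; exact_mod_cast (by omega))
    · have hp := MM_pos hm A
      have hu : n / MM m A < m A := by rw [Nat.div_lt_iff_lt_mul hp]; exact hn
      have hj := Nat.mod_lt n hp
      have e := D_block hm x A (n / MM m A) (n % MM m A) hu hj.le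
      rw [Nat.div_add_mod'] at e
      rw [e, D_mul hm x A _ hu.le, D_MM hm, if_neg (fun h => hk (h k (by omega)))]
      rw [mul_zero, zero_add, norm_mul, norm_pow, rade_norm, one_pow, one_mul]
      exact ih _ hj

lemma psi_refl (hm : ∀ n, 2 ≤ m n) (x : G m) (A : ℕ) : ∀ i < MM m A,
    psi m (MM m A - 1 - i) x = psi m (MM m A - 1) x * (starRingEnd ℂ) (psi m i x) := by
  induction A with
  | zero => intro i hi; have : i = 0 := by simpa [MM] using hi
            subst this; simp [MM, psi]
  | succ A ih =>
    intro i hi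
    have hp := MM_pos hm A
    have hmA := hm A
    set M := MM m A with hM
    have hu : i / M < m A := by rw [Nat.div_lt_iff_lt_mul hp]; exact hi
    have hj := Nat.mod_lt i hp
    obtain ⟨u, j, hij, hu, hj⟩ : ∃ u j, i = u * M + j ∧ u < m A ∧ j < M :=
      ⟨_, _, (Nat.div_add_mod' i M).symm, hu, hj⟩
    obtain ⟨w, hw⟩ : ∃ w, m A = u + 1 + w := ⟨m A - (u + 1), by omega⟩
    have e1 : MM m (A + 1) - 1 - i = w * M + (M - 1 - j) := by
      have h : MM m (A + 1) = u * M + M + w * M := by rw [MM_succ, hw]; ring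
      omega
    have e2 : MM m (A + 1) - 1 = (u + w) * M + (M - 1) := by
      have h : MM m (A + 1) = (u + w) * M + M := by rw [MM_succ, hw]; ring
      omega
    rw [e1, e2, hij, psi_add hm x A _ _ (by omega) (by omega),
      psi_add hm x A _ _ (by omega) (by omega), psi_add hm x A _ _ hu hj, ih j hj]
    have := rade_conj x A
    have h3 : rade m A x ^ u * (starRingEnd ℂ) (rade m A x) ^ u = 1 := by
      rw [← mul_pow, this, one_pow]
    rw [map_mul, map_pow, pow_add]
    linear_combination (- rade m A x ^ w * psi m (M - 1) x * (starRingEnd ℂ) (psi m j x)) * h3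

lemma D_refl (hm : ∀ n, 2 ≤ m n) (x : G m) (A u i : ℕ) (hu : u < m A) (hi : i ≤ MM m A) :
    D m ((u + 1) * MM m A - i) x = D m ((u + 1) * MM m A) x -
      rade m A x ^ u * psi m (MM m A - 1) x * (starRingEnd ℂ) (D m i x) := by
  have hp := MM_pos hm A
  induction i with
  | zero => simp [D]
  | succ i ih =>
    have ih := ih (by omega)
    have e : (u + 1) * MM m A - i = ((u + 1) * MM m A - (i + 1)) + 1 := by
      have : (u + 1) * MM m A = u * MM m A + MM m A := by ring
      omega
    have e2 : (u + 1) * MM m A - (i + 1) = u * MM m A + (MM m A - 1 - i) := by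
      have : (u + 1) * MM m A = u * MM m A + MM m A := by ring
      omega
    have e3 : D m ((u + 1) * MM m A - i) x = D m ((u + 1) * MM m A - (i + 1)) x +
        rade m A x ^ u * (psi m (MM m A - 1) x * (starRingEnd ℂ) (psi m i x)) := by
      rw [e, D, Finset.sum_range_succ, ← D, e2, psi_add hm x A _ _ hu (by omega),
        psi_refl hm x A i (by omega)]
    have e4 : D m (i + 1) x = D m i x + psi m i x := by
      rw [D, Finset.sum_range_succ, ← D]
    rw [e4, map_add]
    linear_combination ih - e3

lemma rade_meas (k : ℕ) : Measurable (rade m k) := by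
  have : Measurable (fun z : ZMod (m k) =>
    Complex.exp (2 * Real.pi * Complex.I * (z.val : ℂ) / (m k : ℂ))) := by
    exact measurable_from_top
  exact this.comp (measurable_pi_apply k)

lemma psi_meas (n : ℕ) : Measurable (psi m n) := by
  unfold psi
  exact Finset.measurable_fun_prod _ fun k _ => (rade_meas k).pow_const _

lemma D_meas (n : ℕ) : Measurable (D m n) := by
  unfold D
  exact Finset.measurable_fun_sum _ fun k _ => psi_meas k

lemma F_meas (q : ℕ → ℝ) (n : ℕ) : Measurable (F m q n) := by
  unfold F
  exact (Finset.measurable_fun_sum _ fun k _ => (D_meas k).const_mul _).const_mul _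

/-- `f` is measurable with `L¹` norm at most `c`. -/
structure Bd (ν : Measure (G m)) (f : G m → ℂ) (c : ℝ) : Prop where
  meas : Measurable f
  nonneg : 0 ≤ c
  le : ∫⁻ y, ‖f y‖ₑ ∂ν ≤ ENNReal.ofReal c

variable {ν : Measure (G m)}

lemma Bd.mono {f : G m → ℂ} {c d : ℝ} (h : Bd ν f c) (hcd : c ≤ d) : Bd ν f d :=
  ⟨h.meas, h.nonneg.trans hcd, h.le.trans (ENNReal.ofReal_le_ofReal hcd)⟩

lemma Bd.of_le {f g : G m → ℂ} {c : ℝ} (h : Bd ν f c) (hg : Measurable g)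
    (hle : ∀ y, ‖g y‖ ≤ ‖f y‖) : Bd ν g c :=
  ⟨hg, h.nonneg, (lintegral_mono fun y => enorm_le_iff_norm_le.2 (hle y)).trans h.le⟩

lemma Bd.add {f g : G m → ℂ} {c d : ℝ} (hf : Bd ν f c) (hg : Bd ν g d) :
    Bd ν (fun y => f y + g y) (c + d) := by
  refine ⟨hf.meas.add hg.meas, add_nonneg hf.nonneg hg.nonneg, ?_⟩
  rw [ENNReal.ofReal_add hf.nonneg hg.nonneg]
  refine (lintegral_mono fun y => enorm_add_le _ _).trans ?_
  rw [lintegral_add_left hf.meas.enorm]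
  exact add_le_add hf.le hg.le

lemma Bd.sum {ι : Type*} (s : Finset ι) {f : ι → G m → ℂ} {c : ι → ℝ}
    (h : ∀ i ∈ s, Bd ν (f i) (c i)) : Bd ν (fun y => ∑ i ∈ s, f i y) (∑ i ∈ s, c i) := by
  classical
  induction s using Finset.induction_on with
  | empty => exact ⟨by simp, by simp, by simp⟩
  | insert a s ha ih =>
    simp only [Finset.sum_insert ha]
    exact (h a (Finset.mem_insert_self _ _)).add (ih fun i hi => h i (Finset.mem_insert_of_mem hi))

lemma Bd.const_mul {f : G m → ℂ} {c : ℝ} (h : Bd ν f c) (a : ℝ) (ha : 0 ≤ a) :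
    Bd ν (fun y => (a : ℂ) * f y) (a * c) := by
  refine ⟨h.meas.const_mul _, mul_nonneg ha h.nonneg, ?_⟩
  have : ∀ y, ‖(a : ℂ) * f y‖ₑ = ENNReal.ofReal a * ‖f y‖ₑ := by
    intro y
    rw [enorm_mul]
    congr 1
    rw [← ofReal_norm, Complex.norm_real, Real.norm_of_nonneg ha]
  simp_rw [this]
  rw [lintegral_const_mul _ h.meas.enorm, ENNReal.ofReal_mul ha]
  exact mul_le_mul_right h.le _

lemma Bd.conj {f : G m → ℂ} {c : ℝ} (h : Bd ν f c) :
    Bd ν (fun y => (starRingEnd ℂ) (f y)) c :=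
  h.of_le (Complex.continuous_conj.measurable.comp h.meas) fun y => by simp

lemma Bd.mul_unit {f g : G m → ℂ} {c : ℝ} (h : Bd ν f c) (hg : Measurable g)
    (hg1 : ∀ y, ‖g y‖ = 1) : Bd ν (fun y => g y * f y) c :=
  h.of_le (hg.mul h.meas) fun y => by simp [hg1]

lemma Bd.sub {f g : G m → ℂ} {c d : ℝ} (hf : Bd ν f c) (hg : Bd ν g d) :
    Bd ν (fun y => f y - g y) (c + d) := by
  simpa [sub_eq_add_neg] using hf.add (hg.of_le (g := fun y => - g y) hg.meas.neg (by simp))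

lemma cyl_meas (n : ℕ) (x : G m) : MeasurableSet (cyl m n x) := by
  have : cyl m n x = ⋂ j, ⋂ (_ : j < n), (fun y : G m => y j) ⁻¹' {x j} := by
    ext y; simp [cyl]
  rw [this]
  exact MeasurableSet.iInter fun j => MeasurableSet.iInter fun _ =>
    (measurable_pi_apply j) (by trivial)

lemma D_MM_Bd (hm : ∀ n, 2 ≤ m n)
    (hν : ∀ (n : ℕ) (x : G m), ν (cyl m n x) = ((MM m n : ℝ≥0∞))⁻¹) (A : ℕ) :
    Bd ν (D m (MM m A)) 1 := by
  refine ⟨D_meas _, zero_le_one, ?_⟩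
  have : ∀ y : G m, ‖D m (MM m A) y‖ₑ = (cyl m A 0).indicator (fun _ => (MM m A : ℝ≥0∞)) y := by
    intro y
    rw [D_MM hm]
    by_cases h : ∀ j < A, y j = 0
    · have h' : y ∈ cyl m A 0 := h
      rw [if_pos h, Set.indicator_of_mem h']
      rw [← ofReal_norm, Complex.norm_natCast, ENNReal.ofReal_natCast]
    · have h' : y ∉ cyl m A 0 := h
      rw [if_neg h, Set.indicator_of_notMem h', enorm_zero]
  simp_rw [this]
  rw [lintegral_indicator (cyl_meas _ _), lintegral_const]
  simp only [Measure.restrict_apply MeasurableSet.univ, Set.univ_inter, hν]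
  rw [ENNReal.mul_inv_cancel (by exact_mod_cast (MM_pos hm A).ne') (by simp)]
  simp

lemma D_mul_Bd (hm : ∀ n, 2 ≤ m n)
    (hν : ∀ (n : ℕ) (x : G m), ν (cyl m n x) = ((MM m n : ℝ≥0∞))⁻¹) (A u : ℕ) (hu : u ≤ m A) :
    Bd ν (D m (u * MM m A)) u := by
  have h : D m (u * MM m A) = fun y => ∑ v ∈ Finset.range u, rade m A y ^ v * D m (MM m A) y := by
    funext y; rw [D_mul hm y A u hu, Finset.sum_mul]
  rw [h]
  have := Bd.sum (ν := ν) (Finset.range u) (f := fun v y => rade m A y ^ v * D m (MM m A) y)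
    (c := fun _ => 1) (fun v _ => (D_MM_Bd hm hν A).mul_unit ((rade_meas A).pow_const v)
      (fun y => by rw [norm_pow, rade_norm, one_pow]))
  simpa using this

/-- Sum of the first `k` Dirichlet kernels. -/
def Z (m : ℕ → ℕ) (k : ℕ) (y : G m) : ℂ := ∑ i ∈ Finset.range k, D m i y

lemma Z_meas (k : ℕ) : Measurable (Z m k) :=
  Finset.measurable_fun_sum _ fun k _ => D_meas k

lemma sum_blocks (f : ℕ → ℂ) (s M : ℕ) :
    ∑ i ∈ Finset.range (s * M), f i =
      ∑ v ∈ Finset.range s, ∑ j ∈ Finset.range M, f (v * M + j) := by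
  induction s with
  | zero => simp
  | succ s ih => rw [Nat.succ_mul, Finset.sum_range_add, ih, Finset.sum_range_succ]

lemma Z_rec (hm : ∀ n, 2 ≤ m n) (A : ℕ) (y : G m) :
    Z m (MM m (A + 1)) y = (MM m A : ℂ) * ∑ u ∈ Finset.range (m A), D m (u * MM m A) y +
      (if y A = 0 then (m A : ℂ) else 0) * Z m (MM m A) y := by
  unfold Z
  rw [MM_succ, sum_blocks, ← rade_sum hm, Finset.mul_sum, Finset.sum_mul, ← Finset.sum_add_distrib]
  apply Finset.sum_congr rfl
  intro u hu
  have hu := Finset.mem_range.1 hu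
  rw [Finset.mul_sum, ← nsmul_eq_mul, ← Finset.card_range (MM m A), ← Finset.sum_const,
    Finset.card_range, ← Finset.sum_add_distrib]
  apply Finset.sum_congr rfl
  intro j hj
  exact D_block hm y A u j hu (Finset.mem_range.1 hj).le

/-- Points whose first `A` coordinates vanish, except possibly the `j`-th. -/
def W (m : ℕ → ℕ) (A j : ℕ) : Set (G m) := {y | ∀ l < A, l ≠ j → y l = 0}

lemma W_meas (A j : ℕ) : MeasurableSet (W m A j) := by
  have : W m A j = ⋂ l, ⋂ (_ : l < A), ⋂ (_ : l ≠ j), (fun y : G m => y l) ⁻¹' {0} := by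
    ext y; simp [W]
  rw [this]
  exact MeasurableSet.iInter fun j => MeasurableSet.iInter fun _ => MeasurableSet.iInter fun _ =>
    (measurable_pi_apply j) (by trivial)

lemma W_le (hm : ∀ n, 2 ≤ m n)
    (hν : ∀ (n : ℕ) (x : G m), ν (cyl m n x) = ((MM m n : ℝ≥0∞))⁻¹) (A j : ℕ) :
    ν (W m A j) ≤ ENNReal.ofReal (m j / MM m A) := by
  classical
  have : NeZero (m j) := ⟨by have := hm j; omega⟩
  have hsub : W m A j ⊆ ⋃ v ∈ (Finset.univ : Finset (ZMod (m j))),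
      cyl m A (Function.update (0 : G m) j v) := by
    intro y hy
    simp only [Set.mem_iUnion]
    refine ⟨y j, Finset.mem_univ _, ?_⟩
    intro l hl
    by_cases h : l = j
    · subst h; simp
    · rw [Function.update_of_ne h]; exact hy l hl h
  refine (measure_mono hsub).trans ((measure_biUnion_finset_le _ _).trans ?_)
  simp only [hν, Finset.sum_const, Finset.card_univ, ZMod.card, nsmul_eq_mul]
  have hp := MM_pos hm A
  rw [ENNReal.ofReal_div_of_pos (by exact_mod_cast hp), ENNReal.ofReal_natCast,
    ENNReal.ofReal_natCast, ENNReal.div_eq_inv_mul, mul_comm]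

open Classical in
lemma Z_point (hm : ∀ n, 2 ≤ m n) (B : ℕ) (hB : ∀ n, m n ≤ B) (A : ℕ) (y : G m) :
    ‖Z m (MM m A) y‖ ≤ ∑ j ∈ Finset.range A,
      (W m A j).indicator (fun _ => (B : ℝ) * MM m A * MM m j) y := by
  induction A with
  | zero => simp [Z, MM, D]
  | succ A ih =>
    rw [Z_rec hm, Finset.sum_range_succ, add_comm]
    have hp : (0 : ℝ) < MM m A := by exact_mod_cast MM_pos hm A
    have hM : (MM m (A + 1) : ℝ) = m A * MM m A := by rw [MM_succ]; push_cast; ring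
    have hBA : (m A : ℝ) ≤ B := by exact_mod_cast hB A
    refine (norm_add_le _ _).trans (add_le_add ?_ ?_)
    · rw [norm_mul]
      by_cases h : y A = 0
      · rw [if_pos h, Complex.norm_natCast]
        refine (mul_le_mul_of_nonneg_left ih (by positivity)).trans ?_
        rw [Finset.mul_sum]
        apply Finset.sum_le_sum
        intro j _
        by_cases hy : y ∈ W m A j
        · have : y ∈ W m (A + 1) j := by
            intro l hl hlj
            rcases Nat.lt_succ_iff_lt_or_eq.1 hl with h1 | h1
            · exact hy l h1 hlj
            · rw [h1]; exact h
          rw [Set.indicator_of_mem hy, Set.indicator_of_mem this, hM]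
          apply le_of_eq; ring
        · rw [Set.indicator_of_notMem hy, mul_zero]
          exact Set.indicator_nonneg (fun _ _ => by positivity) _
      · rw [if_neg h]
        simp only [norm_zero, zero_mul]
        exact Finset.sum_nonneg fun j _ => Set.indicator_nonneg (fun _ _ => by positivity) _
    · rw [norm_mul, Complex.norm_natCast]
      by_cases hy : ∀ l < A, y l = 0
      · have hw : y ∈ W m (A + 1) A := by
          intro l hl hlj
          exact hy l (by omega)
        rw [Set.indicator_of_mem hw]
        have : ‖∑ u ∈ Finset.range (m A), D m (u * MM m A) y‖ ≤ m A * (B * MM m A) := by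
          refine (norm_sum_le _ _).trans ?_
          refine (Finset.sum_le_card_nsmul _ _ (B * MM m A : ℝ) ?_).trans ?_
          · intro u hu
            refine (D_le y _).trans ?_
            have : (u : ℝ) ≤ B := by
              have := Finset.mem_range.1 hu; have := hB A; exact_mod_cast (by omega)
            push_cast
            gcongr
          · simp
        rw [hM]
        calc _ ≤ (MM m A : ℝ) * (m A * (B * MM m A)) := by gcongr
          _ = _ := by ring
      · have : ∑ u ∈ Finset.range (m A), D m (u * MM m A) y = 0 := by
          apply Finset.sum_eq_zero
          intro u hu
          rw [D_mul hm y A u (Finset.mem_range.1 hu).le, D_MM hm, if_neg hy, mul_zero]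
        rw [this, norm_zero, mul_zero]
        exact Set.indicator_nonneg (fun _ _ => by positivity) _

lemma sum_MM_le (hm : ∀ n, 2 ≤ m n) (A : ℕ) :
    ∑ j ∈ Finset.range A, MM m (j + 1) ≤ 2 * MM m A := by
  induction A with
  | zero => simp
  | succ A ih => rw [Finset.sum_range_succ]; have := MM_two hm A; omega

lemma Z_MM_Bd (hm : ∀ n, 2 ≤ m n) (B : ℕ) (hB : ∀ n, m n ≤ B)
    (hν : ∀ (n : ℕ) (x : G m), ν (cyl m n x) = ((MM m n : ℝ≥0∞))⁻¹) (A : ℕ) :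
    Bd ν (Z m (MM m A)) (2 * B * MM m A) := by
  refine ⟨Z_meas _, by positivity, ?_⟩
  have hp : (0 : ℝ) < MM m A := by exact_mod_cast MM_pos hm A
  have h1 : ∀ y : G m, ‖Z m (MM m A) y‖ₑ ≤ ∑ j ∈ Finset.range A,
      (W m A j).indicator (fun _ => ENNReal.ofReal ((B : ℝ) * MM m A * MM m j)) y := by
    intro y
    rw [← ofReal_norm]
    refine (ENNReal.ofReal_le_ofReal (Z_point hm B hB A y)).trans ?_
    rw [ENNReal.ofReal_sum_of_nonneg
      (fun j _ => Set.indicator_nonneg (fun _ _ => by positivity) _)]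
    apply Finset.sum_le_sum
    intro j _
    by_cases hy : y ∈ W m A j
    · rw [Set.indicator_of_mem hy, Set.indicator_of_mem hy]
    · rw [Set.indicator_of_notMem hy, Set.indicator_of_notMem hy]; simp
  refine (lintegral_mono h1).trans ?_
  rw [lintegral_finsetSum _ (fun j _ => measurable_const.indicator (W_meas A j))]
  calc _ ≤ ∑ j ∈ Finset.range A, ENNReal.ofReal (B * MM m (j + 1)) := by
        apply Finset.sum_le_sum
        intro j _
        rw [lintegral_indicator (W_meas A j), lintegral_const]
        simp only [Measure.restrict_apply MeasurableSet.univ, Set.univ_inter]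
        refine (mul_le_mul_right (W_le hm hν A j) _).trans ?_
        rw [← ENNReal.ofReal_mul (by positivity)]
        apply ENNReal.ofReal_le_ofReal
        rw [MM_succ]; push_cast
        apply le_of_eq
        field_simp
    _ ≤ _ := by
        rw [← ENNReal.ofReal_sum_of_nonneg (fun j _ => by positivity)]
        apply ENNReal.ofReal_le_ofReal
        rw [← Finset.mul_sum]
        have := sum_MM_le hm A
        have : (∑ j ∈ Finset.range A, (MM m (j + 1) : ℝ)) ≤ 2 * MM m A := by exact_mod_cast this
        nlinarith [(Nat.cast_nonneg B : (0:ℝ) ≤ B)]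

/-- The unnormalized Nörlund kernel. -/
def T (m : ℕ → ℕ) (q : ℕ → ℝ) (n : ℕ) (y : G m) : ℂ :=
  ∑ i ∈ Finset.range n, (q i : ℂ) * D m (n - i) y

lemma T_split (hm : ∀ n, 2 ≤ m n) (q : ℕ → ℝ) (A s n : ℕ) (hs : s < m A) (hn : n < MM m A)
    (y : G m) :
    T m q (s * MM m A + n) y =
      ((Q q n : ℝ) : ℂ) * D m (s * MM m A) y + rade m A y ^ s * T m q n y +
      ∑ v ∈ Finset.range s, (((∑ i ∈ Finset.range (MM m A), q (n + v * MM m A + i) : ℝ) : ℂ) *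
          D m ((s - v) * MM m A) y -
        (rade m A y ^ (s - v - 1) * psi m (MM m A - 1) y) *
          ∑ i ∈ Finset.range (MM m A),
            (q (n + v * MM m A + i) : ℂ) * (starRingEnd ℂ) (D m i y)) := by
  unfold T
  rw [add_comm (s * MM m A) n, Finset.sum_range_add, sum_blocks]
  congr 1
  · unfold Q
    push_cast
    rw [Finset.sum_mul, Finset.mul_sum, ← Finset.sum_add_distrib]
    apply Finset.sum_congr rfl
    intro i hi
    have hi := Finset.mem_range.1 hi
    rw [show n + s * MM m A - i = s * MM m A + (n - i) by omega,
      D_block hm y A s _ hs (by omega)]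
    ring
  · apply Finset.sum_congr rfl
    intro v hv
    have hv := Finset.mem_range.1 hv
    push_cast
    rw [Finset.sum_mul, Finset.mul_sum, ← Finset.sum_sub_distrib]
    apply Finset.sum_congr rfl
    intro i hi
    have hi := Finset.mem_range.1 hi
    obtain ⟨w, rfl⟩ : ∃ w, s = v + w + 1 := ⟨s - v - 1, by omega⟩
    have e1 : v + w + 1 - v = w + 1 := by omega
    have e2 : n + (v + w + 1) * MM m A - (n + (v * MM m A + i)) = (w + 1) * MM m A - i := by
      have : (v + w + 1) * MM m A = v * MM m A + (w + 1) * MM m A := by ring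
      omega
    rw [e2, e1, D_refl hm y A w i (by omega) hi.le, Nat.add_sub_cancel, ← add_assoc]
    ring

lemma Q_nonneg {q : ℕ → ℝ} (hq : ∀ n, 0 ≤ q n) (n : ℕ) : 0 ≤ Q q n :=
  Finset.sum_nonneg fun _ _ => hq _

lemma Q_mono {q : ℕ → ℝ} (hq : ∀ n, 0 ≤ q n) {a b : ℕ} (h : a ≤ b) : Q q a ≤ Q q b :=
  Finset.sum_le_sum_of_subset_of_nonneg (Finset.range_mono h) fun _ _ _ => hq _

lemma shift_le {q : ℕ → ℝ} (hq : Antitone q) (p M : ℕ) :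
    ∑ i ∈ Finset.range M, q (p + i) ≤ Q q M :=
  Finset.sum_le_sum fun _ _ => hq (by omega)

lemma T_step (hm : ∀ n, 2 ≤ m n) (B : ℕ) (hB : ∀ n, m n ≤ B)
    (hν : ∀ (n : ℕ) (x : G m), ν (cyl m n x) = ((MM m n : ℝ≥0∞))⁻¹)
    (q : ℕ → ℝ) (hqn : ∀ n, 0 ≤ q n) (hq : Antitone q) (A s n : ℕ) (hs : s < m A)
    (hn : n < MM m A) (C c : ℝ)
    (hC : ∀ p, Bd ν (fun y => ∑ i ∈ Finset.range (MM m A), (q (p + i) : ℂ) * D m i y)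
      (C * Q q (MM m A)))
    (hc : Bd ν (T m q n) c) :
    Bd ν (T m q (s * MM m A + n)) ((B + B * (B + C)) * Q q (MM m A) + c) := by
  have hsB : (s : ℝ) ≤ B := by have := hB A; exact_mod_cast (by omega)
  have hQ := Q_nonneg hqn (MM m A)
  have hCQ := (hC 0).nonneg
  have h1 : Bd ν (fun y => ((Q q n : ℝ) : ℂ) * D m (s * MM m A) y) (Q q (MM m A) * B) :=
    ((D_mul_Bd hm hν A s hs.le).const_mul _ (Q_nonneg hqn n)).mono
      (mul_le_mul (Q_mono hqn hn.le) hsB (by positivity) hQ)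
  have h2 : Bd ν (fun y => rade m A y ^ s * T m q n y) c :=
    hc.mul_unit ((rade_meas A).pow_const _) fun y => by rw [norm_pow, rade_norm, one_pow]
  have h3 : ∀ v ∈ Finset.range s, Bd ν (fun y =>
      (((∑ i ∈ Finset.range (MM m A), q (n + v * MM m A + i) : ℝ) : ℂ) *
          D m ((s - v) * MM m A) y -
        (rade m A y ^ (s - v - 1) * psi m (MM m A - 1) y) *
          ∑ i ∈ Finset.range (MM m A),
            (q (n + v * MM m A + i) : ℂ) * (starRingEnd ℂ) (D m i y)))
      (Q q (MM m A) * B + C * Q q (MM m A)) := by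
    intro v _
    apply Bd.sub
    · refine ((D_mul_Bd hm hν A (s - v) (by omega)).const_mul _
        (Finset.sum_nonneg fun _ _ => hqn _)).mono
        (mul_le_mul (shift_le hq _ _) ?_ (by positivity) hQ)
      have := hB A; exact_mod_cast (by omega)
    · refine Bd.mul_unit ?_ (((rade_meas A).pow_const _).mul (psi_meas _)) ?_
      · have := (hC (n + v * MM m A)).conj
        simpa [map_sum] using this
      · intro y
        rw [norm_mul, norm_pow, rade_norm, psi_norm, one_pow, one_mul]
  have h := (h1.add h2).add (Bd.sum _ h3)
  have e : T m q (s * MM m A + n) = _ := funext fun y => T_split hm q A s n hs hn y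
  rw [e]
  refine h.mono ?_
  rw [Finset.sum_const, Finset.card_range, nsmul_eq_mul]
  have : (s : ℝ) * (Q q (MM m A) * B + C * Q q (MM m A)) ≤
      B * (Q q (MM m A) * B + C * Q q (MM m A)) := by gcongr
  linarith

lemma T_all (hm : ∀ n, 2 ≤ m n) (B : ℕ) (hB : ∀ n, m n ≤ B)
    (hν : ∀ (n : ℕ) (x : G m), ν (cyl m n x) = ((MM m n : ℝ≥0∞))⁻¹)
    (q : ℕ → ℝ) (hqn : ∀ n, 0 ≤ q n) (hq : Antitone q) (C : ℝ)
    (hC : ∀ A p, Bd ν (fun y => ∑ i ∈ Finset.range (MM m A), (q (p + i) : ℂ) * D m i y)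
      (C * Q q (MM m A))) (A : ℕ) :
    ∀ n < MM m A, Bd ν (T m q n)
      ((B + B * (B + C)) * ∑ j ∈ Finset.range A, Q q (MM m j)) := by
  induction A with
  | zero =>
    intro n hn
    have : n = 0 := by simpa [MM] using hn
    subst this
    have : T m q 0 = fun _ => 0 := by funext y; simp [T]
    rw [this]
    exact ⟨measurable_const, by simp, by simp⟩
  | succ A ih =>
    intro n hn
    have hp := MM_pos hm A
    have hu : n / MM m A < m A := by rw [Nat.div_lt_iff_lt_mul hp]; exact hn
    have hj := Nat.mod_lt n hp
    have := T_step hm B hB hν q hqn hq A _ _ hu hj C _ (hC A) (ih _ hj)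
    rw [Nat.div_add_mod'] at this
    refine this.mono ?_
    rw [Finset.sum_range_succ]
    linarith

lemma exists_A (hm : ∀ n, 2 ≤ m n) (n : ℕ) (hn : 1 ≤ n) :
    ∃ a, MM m a ≤ n ∧ n < MM m (a + 1) := by
  have hex : ∃ A, n < MM m A := ⟨n, MM_gt hm n⟩
  classical
  have h1 := Nat.find_spec hex
  have h0 : Nat.find hex ≠ 0 := by
    intro h; rw [h] at h1; simp [MM] at h1; omega
  obtain ⟨a, ha⟩ := Nat.exists_eq_succ_of_ne_zero h0
  refine ⟨a, ?_, by rw [ha] at h1; exact h1⟩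
  have := Nat.find_min hex (show a < Nat.find hex by omega)
  omega

lemma sum_MM_le' (hm : ∀ n, 2 ≤ m n) (a : ℕ) :
    ∑ j ∈ Finset.range (a + 1), MM m j ≤ 2 * MM m a := by
  induction a with
  | zero => simp [MM]
  | succ A ih => rw [Finset.sum_range_succ]; have := MM_two hm A; omega

lemma Z_Bd (hm : ∀ n, 2 ≤ m n) (B : ℕ) (hB : ∀ n, m n ≤ B)
    (hν : ∀ (n : ℕ) (x : G m), ν (cyl m n x) = ((MM m n : ℝ≥0∞))⁻¹) (n : ℕ) :
    Bd ν (Z m n) (2 * (B + B * (B + 2 * B)) * n) := by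
  have hQ1 : ∀ n, Q (fun _ => 1) n = n := by intro n; simp [Q]
  rcases Nat.eq_zero_or_pos n with rfl | hn
  · have : Z m 0 = fun _ => 0 := by funext y; simp [Z]
    rw [this]
    exact ⟨measurable_const, by simp, by simp⟩
  obtain ⟨n, rfl⟩ : ∃ k, n = k + 1 := ⟨n - 1, by omega⟩
  obtain ⟨a, ha1, ha2⟩ := exists_A hm (n + 1) hn
  have h := T_all hm B hB hν (fun _ => 1) (fun _ => zero_le_one) antitone_const (2 * B) (by
    intro A p
    have := Z_MM_Bd hm B hB hν A
    simp only [Complex.ofReal_one, one_mul, hQ1]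
    exact this) (a + 1) n (by omega)
  have e : T m (fun _ => 1) n = Z m (n + 1) := by
    funext y
    simp only [T, Z, Complex.ofReal_one, one_mul]
    rw [Finset.sum_range_succ', D_zero, add_zero, ← Finset.sum_range_reflect]
    apply Finset.sum_congr rfl
    intro i hi
    have := Finset.mem_range.1 hi
    congr 1; omega
  rw [e] at h
  refine h.mono ?_
  simp only [hQ1]
  have h1 := sum_MM_le' hm a
  have h2 : (∑ j ∈ Finset.range (a + 1), (MM m j : ℝ)) ≤ 2 * ((n + 1 : ℕ) : ℝ) := by
    exact_mod_cast (by omega)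
  have h3 : (0 : ℝ) ≤ B + B * (B + 2 * B) := by positivity
  calc _ ≤ ((B : ℝ) + B * (B + 2 * B)) * (2 * ((n + 1 : ℕ) : ℝ)) := by gcongr
    _ = _ := by ring

lemma abel {R : Type*} [CommRing R] (a d : ℕ → R) (n : ℕ) :
    ∑ i ∈ Finset.range n, a i * d i = a n * ∑ i ∈ Finset.range n, d i +
      ∑ i ∈ Finset.range n, (a i - a (i + 1)) * ∑ l ∈ Finset.range (i + 1), d l := by
  induction n with
  | zero => simp
  | succ n ih =>
    rw [Finset.sum_range_succ, ih, Finset.sum_range_succ (fun i => (a i - a (i + 1)) * _),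
      Finset.sum_range_succ d]
    ring

lemma abel_Bd (hm : ∀ n, 2 ≤ m n) (B : ℕ) (hB : ∀ n, m n ≤ B)
    (hν : ∀ (n : ℕ) (x : G m), ν (cyl m n x) = ((MM m n : ℝ≥0∞))⁻¹)
    (a : ℕ → ℝ) (han : ∀ n, 0 ≤ a n) (ha : Antitone a) (n : ℕ) :
    Bd ν (fun y => ∑ i ∈ Finset.range n, (a i : ℂ) * D m i y)
      (2 * (B + B * (B + 2 * B)) * ∑ i ∈ Finset.range n, a i) := by
  have h1 := (Z_Bd hm B hB hν n).const_mul (a n) (han n)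
  have h2 := Bd.sum (Finset.range n) fun i _ =>
    (Z_Bd hm B hB hν (i + 1)).const_mul (a i - a (i + 1)) (sub_nonneg.2 (ha (Nat.le_succ i)))
  have h := h1.add h2
  have e1 : (fun y => ∑ i ∈ Finset.range n, (a i : ℂ) * D m i y) =
      fun y => (a n : ℂ) * Z m n y +
        ∑ i ∈ Finset.range n, ((a i - a (i + 1) : ℝ) : ℂ) * Z m (i + 1) y := by
    funext y
    have := abel (fun i => (a i : ℂ)) (fun i => D m i y) n
    rw [this]
    simp only [Z, Complex.ofReal_sub]
  have e2 := abel a (fun _ => 1) n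
  simp only [mul_one, Finset.sum_const, Finset.card_range, nsmul_eq_mul] at e2
  rw [e1, e2]
  refine h.mono (le_of_eq ?_)
  rw [mul_add _ (a n * n), Finset.mul_sum]
  congr 1
  · ring
  · apply Finset.sum_congr rfl; intro i _; ring

lemma T_Bd (hm : ∀ n, 2 ≤ m n) (B : ℕ) (hB : ∀ n, m n ≤ B) :
    ∃ C : ℝ, 0 ≤ C ∧ ∀ (ν : Measure (G m)),
    (∀ (n : ℕ) (x : G m), ν (cyl m n x) = ((MM m n : ℝ≥0∞))⁻¹) →
    ∀ (q : ℕ → ℝ), (∀ n, 0 ≤ q n) → Antitone q → ∀ A, ∀ n < MM m A,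
      Bd ν (T m q n) (C * ∑ j ∈ Finset.range A, Q q (MM m j)) := by
  refine ⟨(B + B * (B + 2 * (B + B * (B + 2 * B)))), by positivity, ?_⟩
  intro ν hν q hqn hq A n hn
  refine T_all hm B hB hν q hqn hq (2 * (B + B * (B + 2 * B))) ?_ A n hn
  intro A p
  refine (abel_Bd hm B hB hν (fun i => q (p + i)) (fun _ => hqn _)
    (fun i j hij => hq (by omega)) _).mono ?_
  have := shift_le hq p (MM m A)
  gcongr

lemma F_eq (q : ℕ → ℝ) (n : ℕ) (y : G m) :
    F m q n y = ((Q q n)⁻¹ : ℝ) * T m q n y := by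
  unfold F T
  push_cast
  congr 1
  rw [← Finset.sum_range_reflect, show Finset.Icc 1 n = Finset.Ico 1 (n + 1) by ext; simp,
    Finset.sum_Ico_eq_sum_range]
  rw [show n + 1 - 1 = n by omega]
  apply Finset.sum_congr rfl
  intro i hi
  have := Finset.mem_range.1 hi
  rw [show n - (1 + i) = n - 1 - i by omega, show n - (n - 1 - i) = 1 + i by omega]

lemma Q_lower {q : ℕ → ℝ} {α : ℝ} (hα0 : 0 < α) (hq0 : 0 < q 0) (hqn : ∀ n, 0 ≤ q n)
    (hQ : (fun n : ℕ => (n : ℝ) ^ α / Q q n) =O[atTop] (fun _ => (1 : ℝ))) :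
    ∃ C : ℝ, 0 ≤ C ∧ ∀ n : ℕ, 1 ≤ n → (n : ℝ) ^ α ≤ C * Q q n := by
  obtain ⟨c, hc⟩ := hQ.bound
  obtain ⟨n0, hn0⟩ := eventually_atTop.1 hc
  refine ⟨|c| + (n0 : ℝ) ^ α / q 0, by positivity, ?_⟩
  intro n hn
  have hQ1 : q 0 ≤ Q q n := by
    have := Q_mono hqn hn
    simpa [Q] using this
  have hQp : 0 < Q q n := hq0.trans_le hQ1
  rcases le_total n0 n with h | h
  · have := hn0 n h
    rw [Real.norm_of_nonneg (by positivity)] at this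
    simp only [norm_one, mul_one] at this
    rw [div_le_iff₀ hQp] at this
    have h1 : c * Q q n ≤ |c| * Q q n := by gcongr; exact le_abs_self c
    have h2 : 0 ≤ (n0 : ℝ) ^ α / q 0 * Q q n := by positivity
    linarith
  · have h1 : (n : ℝ) ^ α ≤ (n0 : ℝ) ^ α :=
      Real.rpow_le_rpow (by positivity) (by exact_mod_cast h) hα0.le
    have h2 : (n0 : ℝ) ^ α / q 0 * q 0 ≤ (n0 : ℝ) ^ α / q 0 * Q q n := by gcongr
    rw [div_mul_cancel₀ _ hq0.ne'] at h2
    have h3 : 0 ≤ |c| * Q q n := by positivity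
    linarith

lemma dq_upper {q : ℕ → ℝ} {α : ℝ} (hα1 : α ≤ 1) (hq0 : 0 < q 0) (hqn : ∀ n, 0 ≤ q n)
    (hq : Antitone q)
    (hq' : (fun n : ℕ => (q n - q (n + 1)) / (n : ℝ) ^ (α - 2)) =O[atTop] (fun _ => (1 : ℝ))) :
    ∃ C : ℝ, 0 ≤ C ∧ ∀ n : ℕ, 1 ≤ n → q n - q (n + 1) ≤ C * (n : ℝ) ^ (α - 2) := by
  obtain ⟨c, hc⟩ := hq'.bound
  obtain ⟨n0, hn0⟩ := eventually_atTop.1 hc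
  refine ⟨|c| + q 0 / ((n0 : ℝ) ^ (α - 2)), by positivity, ?_⟩
  intro n hn
  have hnp : (0 : ℝ) < n := by exact_mod_cast hn
  have hnp' : 0 < (n : ℝ) ^ (α - 2) := by positivity
  rcases le_total n0 n with h | h
  · have := (le_abs_self _).trans (hn0 n h)
    simp only [norm_one, mul_one] at this
    rw [div_le_iff₀ hnp'] at this
    have h1 : c * (n : ℝ) ^ (α - 2) ≤ |c| * (n : ℝ) ^ (α - 2) := by gcongr; exact le_abs_self c
    have h2 : 0 ≤ q 0 / ((n0 : ℝ) ^ (α - 2)) * (n : ℝ) ^ (α - 2) := by positivity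
    linarith
  · have hn0p : (0 : ℝ) < n0 := by exact_mod_cast (by omega)
    have h1 : (n0 : ℝ) ^ (α - 2) ≤ (n : ℝ) ^ (α - 2) :=
      Real.rpow_le_rpow_of_nonpos hnp (by exact_mod_cast h) (by linarith)
    have h2 : q 0 / ((n0 : ℝ) ^ (α - 2)) * (n0 : ℝ) ^ (α - 2) ≤
      q 0 / ((n0 : ℝ) ^ (α - 2)) * (n : ℝ) ^ (α - 2) := by gcongr
    rw [div_mul_cancel₀ _ (by positivity)] at h2
    have h3 : 0 ≤ |c| * (n : ℝ) ^ (α - 2) := by positivity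
    have := hqn (n + 1)
    have := hq (Nat.zero_le n)
    linarith

/-- Telescoping bound for positive exponents. -/
lemma tele_pos {α : ℝ} (hα0 : 0 < α) (hα1 : α ≤ 1) (x : ℝ) (hx : 0 ≤ x) :
    α * (x + 1) ^ (α - 1) ≤ (x + 1) ^ α - x ^ α := by
  have hp : 0 < x + 1 := by linarith
  have h1 : (1 + (-(1 / (x + 1)))) ^ α ≤ 1 + α * (-(1 / (x + 1))) :=
    rpow_one_add_le_one_add_mul_self (by
      have : 1 / (x + 1) ≤ 1 := by rw [div_le_one hp]; linarith
      linarith) hα0.le hα1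
  have h2 : x = (x + 1) * (1 + (-(1 / (x + 1)))) := by field_simp; ring
  have h3 : x ^ α = (x + 1) ^ α * (1 + (-(1 / (x + 1)))) ^ α := by
    conv_lhs => rw [h2]
    rw [Real.mul_rpow hp.le]
    have : 1 / (x + 1) ≤ 1 := by rw [div_le_one hp]; linarith
    linarith
  have h4 : (x + 1) ^ (α - 1) = (x + 1) ^ α * (1 / (x + 1)) := by
    rw [Real.rpow_sub_one hp.ne']; ring
  rw [h3, h4]
  have : (x + 1) ^ α * (1 + (-(1 / (x + 1)))) ^ α ≤ (x + 1) ^ α * (1 + α * (-(1 / (x + 1)))) := by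
    gcongr
  linarith

/-- Telescoping bound for negative exponents. -/
lemma tele_neg {α : ℝ} (hα0 : 0 < α) (hα1 : α < 1) (x : ℝ) (hx : 1 ≤ x) :
    (1 - α) * (x + 1) ^ (α - 2) ≤ x ^ (α - 1) - (x + 1) ^ (α - 1) := by
  have h := tele_pos (α := 1 - α) (by linarith) (by linarith) x (by linarith)
  have hp : 0 < x + 1 := by linarith
  have hx0 : 0 < x := by linarith
  set a := x ^ (1 - α) with ha
  set b := (x + 1) ^ (1 - α) with hb
  have hap : 0 < a := by positivity
  have hbp : 0 < b := by positivity
  have hab : a ≤ b := Real.rpow_le_rpow hx0.le (by linarith) (by linarith)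
  have e1 : x ^ (α - 1) = a⁻¹ := by rw [ha, ← Real.rpow_neg hx0.le]; congr 1; ring
  have e2 : (x + 1) ^ (α - 1) = b⁻¹ := by rw [hb, ← Real.rpow_neg hp.le]; congr 1; ring
  have e3 : (x + 1) ^ (1 - α - 1) = b / (x + 1) := by rw [Real.rpow_sub_one hp.ne']
  have e4 : (x + 1) ^ (α - 2) = b⁻¹ / (x + 1) := by
    rw [← e2, ← Real.rpow_sub_one hp.ne']; congr 1; ring
  rw [e3] at h
  rw [e1, e2, e4]
  have e5 : a⁻¹ - b⁻¹ = (b - a) * (a⁻¹ * b⁻¹) := by field_simp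
  have e6 : (1 - α) * (b⁻¹ / (x + 1)) = (1 - α) * (b / (x + 1)) * (b⁻¹ * b⁻¹) := by field_simp
  rw [e5, e6]
  have : b⁻¹ ≤ a⁻¹ := by gcongr
  apply mul_le_mul h _ (by positivity) (by linarith)
  gcongr

lemma q_tail {q : ℕ → ℝ} {α : ℝ} (hα0 : 0 < α) (hα1 : α < 1) {C : ℝ} (hC : 0 ≤ C)
    (h : ∀ n : ℕ, 1 ≤ n → q n - q (n + 1) ≤ C * (n : ℝ) ^ (α - 2)) (i n : ℕ) (hi : 1 ≤ i)
    (hin : i ≤ n) :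
    q i - q n ≤ 4 * C / (1 - α) * ((i : ℝ) ^ (α - 1) - (n : ℝ) ^ (α - 1)) := by
  induction n, hin using Nat.le_induction with
  | base => simp
  | succ n hn ih =>
    have hn1 : (1 : ℝ) ≤ n := by exact_mod_cast hi.trans hn
    have h1 := h n (hi.trans hn)
    have h2 := tele_neg hα0 hα1 n hn1
    have h3 : (n : ℝ) ^ (α - 2) ≤ 4 * ((n : ℝ) + 1) ^ (α - 2) := by
      have e : ((2 : ℝ) * n) ^ (α - 2) ≤ ((n : ℝ) + 1) ^ (α - 2) :=
        Real.rpow_le_rpow_of_nonpos (by linarith) (by linarith) (by linarith)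
      rw [Real.mul_rpow (by norm_num) (by linarith)] at e
      have e2 : (2 : ℝ) ^ (-2 : ℝ) ≤ (2 : ℝ) ^ (α - 2) :=
        Real.rpow_le_rpow_of_exponent_le (by norm_num) (by linarith)
      have e3 : (2 : ℝ) ^ (-2 : ℝ) = 1 / 4 := by
        rw [Real.rpow_neg (by norm_num)]; norm_num
      have e4 : 0 ≤ (n : ℝ) ^ (α - 2) := by positivity
      rw [e3] at e2
      have e5 := mul_le_mul_of_nonneg_right e2 e4
      linarith
    have h4 : C * (n : ℝ) ^ (α - 2) ≤
        4 * C / (1 - α) * ((n : ℝ) ^ (α - 1) - ((n : ℝ) + 1) ^ (α - 1)) := by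
      have hα : 0 < 1 - α := by linarith
      calc C * (n : ℝ) ^ (α - 2) ≤ C * (4 * ((n : ℝ) + 1) ^ (α - 2)) := by gcongr
        _ = 4 * C / (1 - α) * ((1 - α) * ((n : ℝ) + 1) ^ (α - 2)) := by field_simp
        _ ≤ _ := by gcongr
    push_cast
    linarith

lemma q_sum {q : ℕ → ℝ} {α : ℝ} (hα0 : 0 < α) (hα1 : α ≤ 1) (hq0 : 0 < q 0) (hqn : ∀ n, 0 ≤ q n)
    (hq : Antitone q)
    (hq' : (fun n : ℕ => (q n - q (n + 1)) / (n : ℝ) ^ (α - 2)) =O[atTop] (fun _ => (1 : ℝ))) :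
    ∃ C : ℝ, 0 ≤ C ∧ ∀ M n : ℕ, 1 ≤ M → M ≤ n →
      ∑ i ∈ Finset.range M, (q i - q n) ≤ C * (M : ℝ) ^ α := by
  rcases hα1.eq_or_lt with rfl | hlt
  · refine ⟨q 0, hq0.le, ?_⟩
    intro M n _ _
    refine (Finset.sum_le_card_nsmul _ _ (q 0) ?_).trans ?_
    · intro i _
      have := hq (Nat.zero_le i); have := hqn n; linarith
    · simp [mul_comm]
  · obtain ⟨C, hC, h⟩ := dq_upper hα1 hq0 hqn hq hq'
    have hα : 0 < 1 - α := by linarith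
    set C3 := 4 * C / (1 - α) with hC3
    have hC3p : 0 ≤ C3 := by positivity
    refine ⟨q 0 + C3 / α, by positivity, ?_⟩
    have key : ∀ k n : ℕ, k + 1 ≤ n →
        ∑ i ∈ Finset.range (k + 1), (q i - q n) ≤ q 0 + C3 / α * (k : ℝ) ^ α := by
      intro k n
      induction k with
      | zero => intro _; simp [Real.zero_rpow hα0.ne', hqn n]
      | succ k ih =>
        intro hk
        rw [Finset.sum_range_succ]
        have h1 := ih (by omega)
        have h2 := q_tail hα0 hlt hC h (k + 1) n (by omega) (by omega)
        rw [← hC3] at h2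
        have h3 := tele_pos hα0 hα1 k (by positivity)
        have h4 : 0 ≤ (n : ℝ) ^ (α - 1) := by positivity
        have h5 : C3 * ((k : ℝ) + 1) ^ (α - 1) ≤
            C3 / α * (((k : ℝ) + 1) ^ α - (k : ℝ) ^ α) := by
          calc C3 * ((k : ℝ) + 1) ^ (α - 1) = C3 / α * (α * ((k : ℝ) + 1) ^ (α - 1)) := by
                field_simp
            _ ≤ _ := by gcongr
        push_cast at h2 ⊢
        have h6 : 0 ≤ C3 * (n : ℝ) ^ (α - 1) := by positivity
        linarith
    intro M n hM hMn
    obtain ⟨k, rfl⟩ : ∃ k, M = k + 1 := ⟨M - 1, by omega⟩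
    refine (key k n hMn).trans ?_
    have h1 : (1 : ℝ) ≤ ((k + 1 : ℕ) : ℝ) ^ α :=
      Real.one_le_rpow (by push_cast; linarith [(Nat.cast_nonneg k : (0:ℝ) ≤ k)]) hα0.le
    have h2 : (k : ℝ) ^ α ≤ ((k + 1 : ℕ) : ℝ) ^ α :=
      Real.rpow_le_rpow (by positivity) (by push_cast; linarith) hα0.le
    have h3 : C3 / α * (k : ℝ) ^ α ≤ C3 / α * ((k + 1 : ℕ) : ℝ) ^ α := by gcongr
    nlinarith

lemma geom_MM (hm : ∀ n, 2 ≤ m n) {α : ℝ} (hα0 : 0 < α) :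
    ∃ R : ℝ, 0 ≤ R ∧ ∀ a, ∑ j ∈ Finset.range (a + 1), (MM m j : ℝ) ^ α ≤ R * (MM m a : ℝ) ^ α := by
  have hρ : (1 : ℝ) < (2 : ℝ) ^ α := Real.one_lt_rpow (by norm_num) hα0
  set ρ := (2 : ℝ) ^ α with hρd
  have hρ1 : 0 < ρ - 1 := by linarith
  refine ⟨ρ / (ρ - 1), by positivity, ?_⟩
  intro a
  induction a with
  | zero =>
    simp only [MM, zero_add, Finset.sum_range_one, Nat.cast_one, Real.one_rpow, mul_one]
    rw [le_div_iff₀ hρ1]; linarith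
  | succ a ih =>
    rw [Finset.sum_range_succ]
    have h1 : ρ * (MM m a : ℝ) ^ α ≤ (MM m (a + 1) : ℝ) ^ α := by
      rw [hρd, ← Real.mul_rpow (by norm_num) (by positivity)]
      exact Real.rpow_le_rpow (by positivity) (by exact_mod_cast MM_two hm a) hα0.le
    have h2 : ρ / (ρ - 1) * (MM m a : ℝ) ^ α ≤ 1 / (ρ - 1) * (MM m (a + 1) : ℝ) ^ α := by
      calc _ = 1 / (ρ - 1) * (ρ * (MM m a : ℝ) ^ α) := by ring
        _ ≤ _ := by gcongr
    have h3 : ρ / (ρ - 1) = 1 / (ρ - 1) + 1 := by field_simp; ring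
    rw [h3] at ih h2 ⊢
    linarith

lemma Q_sum (hm : ∀ n, 2 ≤ m n) {q : ℕ → ℝ} {α : ℝ} (hα0 : 0 < α) (hα1 : α ≤ 1) (hq0 : 0 < q 0)
    (hqn : ∀ n, 0 ≤ q n) (hq : Antitone q)
    (hQ : (fun n : ℕ => (n : ℝ) ^ α / Q q n) =O[atTop] (fun _ => (1 : ℝ)))
    (hq' : (fun n : ℕ => (q n - q (n + 1)) / (n : ℝ) ^ (α - 2)) =O[atTop] (fun _ => (1 : ℝ))) :
    ∃ K : ℝ, 0 ≤ K ∧ ∀ a n : ℕ, MM m a ≤ n →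
      ∑ j ∈ Finset.range (a + 1), Q q (MM m j) ≤ K * Q q n := by
  obtain ⟨C1, hC1, h1⟩ := Q_lower hα0 hq0 hqn hQ
  obtain ⟨C2, hC2, h2⟩ := q_sum hα0 hα1 hq0 hqn hq hq'
  obtain ⟨R, hR, h3⟩ := geom_MM hm hα0
  refine ⟨2 + C2 * (R * C1), by positivity, ?_⟩
  intro a n han
  have hn1 : 1 ≤ n := (MM_pos hm a).trans_le han
  have hQj : ∀ j ∈ Finset.range (a + 1),
      Q q (MM m j) ≤ q n * MM m j + C2 * (MM m j : ℝ) ^ α := by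
    intro j hj
    have hj := Finset.mem_range.1 hj
    have := h2 (MM m j) n (MM_pos hm j) ((MM_mono hm (by omega)).trans han)
    rw [Finset.sum_sub_distrib, Finset.sum_const, Finset.card_range, nsmul_eq_mul] at this
    unfold Q
    linarith
  refine (Finset.sum_le_sum hQj).trans ?_
  rw [Finset.sum_add_distrib, ← Finset.mul_sum, ← Finset.mul_sum]
  have e1 : (∑ j ∈ Finset.range (a + 1), (MM m j : ℝ)) ≤ 2 * n := by
    have := sum_MM_le' hm a
    exact_mod_cast (by omega)
  have e2 : n * q n ≤ Q q n := by
    have := Finset.card_nsmul_le_sum (Finset.range n) q (q n)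
      (fun i hi => hq (Finset.mem_range.1 hi).le)
    simpa [Q] using this
  have e3 : (MM m a : ℝ) ^ α ≤ (n : ℝ) ^ α :=
    Real.rpow_le_rpow (by positivity) (by exact_mod_cast han) hα0.le
  have e4 : q n * (∑ j ∈ Finset.range (a + 1), (MM m j : ℝ)) ≤ q n * (2 * n) := by
    have := hqn n
    gcongr
  have e5 : C2 * ∑ j ∈ Finset.range (a + 1), (MM m j : ℝ) ^ α ≤ C2 * (R * (C1 * Q q n)) := by
    have := h3 a
    have h1n := h1 n hn1
    calc _ ≤ C2 * (R * (MM m a : ℝ) ^ α) := by gcongr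
      _ ≤ C2 * (R * (n : ℝ) ^ α) := by gcongr
      _ ≤ _ := by gcongr
  linarith

lemma F_L1 (hm : ∀ n, 2 ≤ m n) (hmb : ∃ B, ∀ n, m n ≤ B)
    {q : ℕ → ℝ} {α : ℝ} (hα0 : 0 < α) (hα1 : α ≤ 1) (hq0 : 0 < q 0)
    (hqn : ∀ n, 0 ≤ q n) (hq : Antitone q)
    (hQ : (fun n : ℕ => (n : ℝ) ^ α / Q q n) =O[atTop] (fun _ => (1 : ℝ)))
    (hq' : (fun n : ℕ => (q n - q (n + 1)) / (n : ℝ) ^ (α - 2)) =O[atTop] (fun _ => (1 : ℝ))) :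
    ∃ c : ℝ, 0 ≤ c ∧ ∀ (ν : Measure (G m)),
    (∀ (n : ℕ) (x : G m), ν (cyl m n x) = ((MM m n : ℝ≥0∞))⁻¹) → ∀ r, 1 ≤ r →
      Bd ν (F m q r) c := by
  obtain ⟨B, hB⟩ := hmb
  obtain ⟨C, hC, h⟩ := T_Bd hm B hB
  obtain ⟨K, hK, hS⟩ := Q_sum hm hα0 hα1 hq0 hqn hq hQ hq'
  refine ⟨C * K, by positivity, ?_⟩
  intro ν hν r hr
  obtain ⟨a, ha1, ha2⟩ := exists_A hm r hr
  have hQp : 0 < Q q r := by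
    have := Q_mono hqn hr
    simp [Q] at this ⊢
    linarith
  have := (h ν hν q hqn hq (a + 1) r ha2).const_mul (Q q r)⁻¹ (by positivity)
  have e : F m q r = fun y => (((Q q r)⁻¹ : ℝ) : ℂ) * T m q r y := funext fun y => F_eq q r y
  rw [e]
  refine this.mono ?_
  calc _ ≤ (Q q r)⁻¹ * (C * (K * Q q r)) := by gcongr; exact hS a r ha1
    _ = C * K := by field_simp

lemma F_point (hm : ∀ n, 2 ≤ m n) {q : ℕ → ℝ} (hqn : ∀ n, 0 ≤ q n) (y : G m) (k r : ℕ)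
    (hk : y k ≠ 0) : ‖F m q r y‖ ≤ MM m (k + 1) := by
  rw [F_eq, norm_mul, Complex.norm_real, Real.norm_of_nonneg (inv_nonneg.2 (Q_nonneg hqn r))]
  have : ‖T m q r y‖ ≤ Q q r * MM m (k + 1) := by
    unfold T Q
    refine (norm_sum_le _ _).trans ?_
    rw [Finset.sum_mul]
    apply Finset.sum_le_sum
    intro i _
    rw [norm_mul, Complex.norm_real, Real.norm_of_nonneg (hqn i)]
    exact mul_le_mul_of_nonneg_left (D_bound hm y k hk (r - i) _ (MM_gt hm _)) (hqn i)
  rcases (Q_nonneg hqn r).eq_or_lt with h | h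
  · rw [← h]; simp
  · calc _ ≤ (Q q r)⁻¹ * (Q q r * MM m (k + 1)) := by gcongr
      _ = _ := by field_simp

end Helpers

/-- Let `0 < α ≤ 1` and let `{q_n}` be a non-increasing sequence of
non-negative reals with `q_0 > 0` satisfying `n^α/Q_n = O(1)` and
`(q_n - q_{n+1})/n^{α-2} = O(1)`. Then there is a constant `c_α` such that for all `N`, all
`r ≥ M_N`, all `0 ≤ k ≤ N-1`, `1 ≤ s_k ≤ m_k - 1` and all `x ∈ I_N(s_k e_k)`:
`∫_{I_N} |F_r(x-t)| dμ(t) ≤ c_α M_k / M_N`. -/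
theorem statement9
    (m : ℕ → ℕ) (hm : ∀ n, 2 ≤ m n) (hmb : ∃ B, ∀ n, m n ≤ B)
    (μ : Measure (G m)) [IsProbabilityMeasure μ]
    (hμ : ∀ (n : ℕ) (x : G m), μ (cyl m n x) = ((MM m n : ℝ≥0∞))⁻¹)
    (α : ℝ) (hα0 : 0 < α) (hα1 : α ≤ 1)
    (q : ℕ → ℝ) (hq0 : 0 < q 0) (hqnn : ∀ n, 0 ≤ q n) (hqmono : ∀ n, q (n + 1) ≤ q n)
    (hQ : (fun n : ℕ => (n : ℝ) ^ α / Q q n) =O[atTop] (fun _ => (1 : ℝ)))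
    (hq' : (fun n : ℕ => (q n - q (n + 1)) / (n : ℝ) ^ (α - 2)) =O[atTop] (fun _ => (1 : ℝ))) :
    ∃ c : ℝ, ∀ N r : ℕ, MM m N ≤ r → ∀ k : ℕ, k ≤ N - 1 → ∀ sk : ℕ,
      1 ≤ sk → sk ≤ m k - 1 →
      ∀ x ∈ cyl m N (oneSpike m k sk),
        ∫⁻ t in cyl m N 0, (‖F m q r (x - t)‖₊ : ℝ≥0∞) ∂μ ≤
          ENNReal.ofReal (c * (MM m k : ℝ) / (MM m N : ℝ)) := by
  obtain ⟨c, hc, hF⟩ := F_L1 hm hmb hα0 hα1 hq0 hqnn (antitone_nat_of_succ_le hqmono) hQ hq'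
  obtain ⟨B, hB⟩ := hmb
  refine ⟨c + B, ?_⟩
  intro N r hr k hk sk hsk1 hsk2 x hx
  rcases Nat.eq_zero_or_pos N with rfl | hN
  · have hk0 : k = 0 := by omega
    subst hk0
    have hmeas : Measurable (fun t : G m => x - t) := by
      refine measurable_pi_lambda _ fun j => ?_
      have : Measurable (fun z : ZMod (m j) => x j - z) := measurable_from_top
      exact this.comp (measurable_pi_apply j)
    have hν : ∀ (n : ℕ) (y : G m),
        (μ.map (fun t : G m => x - t)) (cyl m n y) = ((MM m n : ℝ≥0∞))⁻¹ := by
      intro n y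
      rw [Measure.map_apply hmeas (cyl_meas n y), ← hμ n (x - y)]
      congr 1
      ext t
      simp only [cyl, Set.mem_preimage, Set.mem_ofPred_eq, Pi.sub_apply]
      refine forall₂_congr fun j _ => ?_
      constructor
      · intro h; rw [← h]; ring
      · intro h; rw [h]; ring
    have h := (hF _ hν r (by simpa [MM] using hr)).le
    rw [lintegral_map (F_meas q r).enorm hmeas] at h
    refine (setLIntegral_le_lintegral _ _).trans (h.trans ?_)
    apply ENNReal.ofReal_le_ofReal
    simp [MM]
  · have hkN : k < N := by omega
    have hmk := hm k
    have hpt : ∀ t ∈ cyl m N (0 : G m), (‖F m q r (x - t)‖₊ : ℝ≥0∞) ≤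
        ENNReal.ofReal (MM m (k + 1)) := by
      intro t ht
      have hne : (x - t) k ≠ 0 := by
        rw [Pi.sub_apply, ht k hkN, hx k hkN]
        simp only [oneSpike, if_true, Pi.zero_apply, sub_zero]
        rw [Ne, ZMod.natCast_eq_zero_iff]
        intro hd
        have := Nat.le_of_dvd (by omega) hd
        omega
      have := F_point hm hqnn (x - t) k r hne
      change ‖F m q r (x - t)‖ₑ ≤ _
      rw [← ofReal_norm]
      exact ENNReal.ofReal_le_ofReal this
    refine (setLIntegral_mono measurable_const hpt).trans ?_
    rw [setLIntegral_const, hμ]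
    have hp : (0 : ℝ) < MM m N := by exact_mod_cast MM_pos hm N
    have e : ((MM m N : ℝ≥0∞))⁻¹ = ENNReal.ofReal ((MM m N : ℝ)⁻¹) := by
      rw [ENNReal.ofReal_inv_of_pos hp, ENNReal.ofReal_natCast]
    rw [e, ← ENNReal.ofReal_mul (by positivity)]
    apply ENNReal.ofReal_le_ofReal
    rw [← div_eq_mul_inv, MM_succ]
    push_cast
    have : (m k : ℝ) ≤ c + B := by
      have : (m k : ℝ) ≤ B := by exact_mod_cast hB k
      linarith
    gcongr

end Vilenkin
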